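/- For every natural number n with 1 ≤ n ≤ 12, the Placid Platypus function satisfies: PP(n) is the unique k ∈ {1,2,3,4} with BB(k−1) < n ≤ BB(k), where BB(0) = 0; explicitly, PP(1) = 1, PP(n) = 2 for 2 ≤ n ≤ 4, PP(n) = 3 for 5 ≤ n ≤ 6, and PP(n) = 4 for 7 ≤ n ≤ 12. -/

import Mathlib

/-- Head movement directions. -/
inductive Dir : Type
  | left | stay | right

/-- Displacement of the head for each direction. -/
def Dir.move : Dir → ℤ
  | .left => -1
  | .stay => 0
  | .right => 1

/-- A configuration of a Turing machine with state type `Q`: current state,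
head position and the two-way infinite binary tape. -/
structure Cfg (Q : Type) where
  state : Q
  head : ℤ
  tape : ℤ → Bool

/-- One step of the machine with partial transition function `f`
(`none` if the machine halts, i.e. `f` is undefined on the current pair). -/
def stepTM {Q : Type} (f : Q × Bool → Option (Q × Bool × Dir)) (c : Cfg Q) :
    Option (Cfg Q) :=
  (f (c.state, c.tape c.head)).map fun qbd =>
    ⟨qbd.1, c.head + qbd.2.2.move, Function.update c.tape c.head qbd.2.1⟩

/-- Running `t` steps (returns `none` if the machine halts strictly before `t` steps). -/
def stepsTM {Q : Type} (f : Q × Bool → Option (Q × Bool × Dir)) :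
    ℕ → Cfg Q → Option (Cfg Q)
  | 0, c => some c
  | t + 1, c => (stepTM f c).bind (stepsTM f t)

/-- Initial configuration: initial state `q0`, head at `0`, all-zero tape. -/
def initCfg {Q : Type} (q0 : Q) : Cfg Q := ⟨q0, 0, fun _ => false⟩

/-- The machine is halted in configuration `c`: the transition function is
undefined on the current (state, symbol) pair. -/
def Halted {Q : Type} (f : Q × Bool → Option (Q × Bool × Dir)) (c : Cfg Q) : Prop :=
  f (c.state, c.tape c.head) = none

/-- `w` is the tape contents from the leftmost 1 to the rightmost 1
(the empty word if the tape contains no 1). -/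
def TapeWord (tape : ℤ → Bool) (w : List Bool) : Prop :=
  ∃ i : ℤ,
    (∀ k : ℕ, k < w.length → w.getD k false = tape (i + k)) ∧
    (∀ j : ℤ, tape j = true → i ≤ j ∧ j < i + w.length) ∧
    (w ≠ [] → w.getD 0 false = true ∧ w.getLastD false = true)

/-- The machine with transition function `f` and initial state `q0`, started on
the all-zero tape, halts after exactly `t` steps computing the word `w`. -/
def Computes {Q : Type} (f : Q × Bool → Option (Q × Bool × Dir)) (q0 : Q)
    (w : List Bool) (t : ℕ) : Prop :=
  ∃ c : Cfg Q, stepsTM f t (initCfg q0) = some c ∧ Halted f c ∧ TapeWord c.tape w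

/-!
Each value of `n` is attained by an explicit machine. Minimality amounts to the upper bounds
`BB(1) ≤ 1`, `BB(2) ≤ 4` and `BB(3) ≤ 6`, which come from a finite search.

A run of stay moves ends in halting, in a genuine move or in no result at all, so every machine
acts as a stay-free one. Until the first 1 is written the tape is blank; restarting the machine
there, renaming its states and reflecting the tape, one may assume that state `0` reading `0`
writes `1`, moves right and enters state `0` or `1`. The machine is then run on a partial
transition table, branching over the value of each entry when it is first needed. If the entry is
undefined, at most one further 1 is written; once the table is full the machine cannot halt.

Tables that survive long enough are proved never to halt by a finite set of local contexts (state,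
scanned cell, and the words of bounded length next to it on either side) that is closed under the
moves of the machine and contains the blank context. For some machines the cells must also record
which states last left them.
-/

/-! ### Counting ones -/

theorem encard_setOf_nat (p : ℕ → Bool) :
    {i | p i = true}.encard = {i | p (i + 1) = true}.encard + (p 0).toNat := by
  have hsplit :
      {i | p i = true} = Nat.succ '' {i | p (i + 1) = true} ∪ {i | i = 0 ∧ p 0 = true} := by
    ext (_ | i) <;> simp
  have hdisj : Disjoint (Nat.succ '' {i | p (i + 1) = true}) {i | i = 0 ∧ p 0 = true} := by
    rw [Set.disjoint_left]
    rintro _ ⟨i, -, rfl⟩ ⟨h, -⟩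
    exact Nat.succ_ne_zero i h
  rw [hsplit, Set.encard_union_eq hdisj, Nat.succ_injective.encard_image]
  cases p 0 <;> simp

theorem encard_getD_eq_count (w : List Bool) :
    {i | w.getD i false = true}.encard = w.count true := by
  induction w with
  | nil => simp
  | cons b w ih =>
    rw [encard_setOf_nat]
    cases b <;> simp_all

theorem encard_setOf_int (p : ℤ → Bool) (h : ℤ) :
    {j | p j = true}.encard =
      {i : ℕ | p (h - 1 - i) = true}.encard + {i : ℕ | p (h + 1 + i) = true}.encard +
        (p h).toNat := by
  have hright : {j | h ≤ j ∧ p j = true} = (fun i : ℕ => h + i) '' {i : ℕ | p (h + i) = true} := by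
    ext j
    constructor
    · rintro ⟨hj, hp⟩
      refine ⟨(j - h).toNat, ?_, ?_⟩ <;> simp [hj, hp]
    · rintro ⟨i, hi, rfl⟩
      exact ⟨by simp, hi⟩
  have hleft : {j | j < h ∧ p j = true} =
      (fun i : ℕ => h - 1 - i) '' {i : ℕ | p (h - 1 - i) = true} := by
    ext j
    constructor
    · rintro ⟨hj, hp⟩
      obtain ⟨i, rfl⟩ : ∃ i : ℕ, j = h - 1 - i := ⟨(h - 1 - j).toNat, by omega⟩
      exact ⟨i, hp, rfl⟩
    · rintro ⟨i, hi, rfl⟩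
      exact ⟨by dsimp only; omega, hi⟩
  have hsplit : {j | p j = true} = {j | j < h ∧ p j = true} ∪ {j | h ≤ j ∧ p j = true} := by
    ext j
    simp [← or_and_right, lt_or_ge]
  have hdisj : Disjoint {j | j < h ∧ p j = true} {j | h ≤ j ∧ p j = true} :=
    Set.disjoint_left.2 fun j hj hj' => hj.1.not_ge hj'.1
  have hinj : Function.Injective fun i : ℕ => h + (i : ℤ) := fun a b hab => by simpa using hab
  have hinj' : Function.Injective fun i : ℕ => h - 1 - (i : ℤ) := fun a b hab => by simpa using hab
  rw [hsplit, Set.encard_union_eq hdisj, hleft, hright, hinj.encard_image, hinj'.encard_image,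
    encard_setOf_nat fun i => p (h + i), add_assoc]
  simp [add_assoc, add_comm (1 : ℤ)]

theorem TapeWord.encard_ones {tape : ℤ → Bool} {w : List Bool} (hw : TapeWord tape w) :
    {j | tape j = true}.encard = w.count true := by
  obtain ⟨i, hval, hsupp, -⟩ := hw
  have himage : {j | tape j = true} = (fun m : ℕ => i + m) '' {m | w.getD m false = true} := by
    ext j
    constructor
    · intro hj
      obtain ⟨hle, hlt⟩ := hsupp j hj
      obtain ⟨m, rfl⟩ := Int.le.dest hle
      exact ⟨m, (hval m (by omega)).trans hj, rfl⟩
    · rintro ⟨m, hm, rfl⟩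
      have hlt : m < w.length := by
        by_contra hge
        exact Bool.false_ne_true ((List.getD_eq_default _ _ (not_lt.1 hge)).symm.trans hm)
      exact (hval m hlt).symm.trans hm
  have hinj : Function.Injective fun m : ℕ => i + (m : ℤ) := fun a b hab => by simpa using hab
  rw [himage, hinj.encard_image, encard_getD_eq_count]

theorem exists_tapeWord {tape : ℤ → Bool} (hfin : {j | tape j = true}.Finite) :
    ∃ w, TapeWord tape w := by
  obtain hempty | hne := {j | tape j = true}.eq_empty_or_nonempty
  · exact ⟨[], 0, by simp, fun j hj => (hempty.subset hj).elim, by simp⟩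
  obtain ⟨a, ha, hmin⟩ := Set.exists_min_image _ id hfin hne
  obtain ⟨z, hz, hmax⟩ := Set.exists_max_image _ id hfin hne
  obtain ⟨m, rfl⟩ := Int.le.dest (hmin z hz)
  refine ⟨(List.range (m + 1)).map fun i : ℕ => tape (a + i), a, ?_, ?_, fun _ => ⟨?_, ?_⟩⟩
  · intro i hi
    simp only [List.length_map, List.length_range] at hi
    simp [List.getD_eq_getElem?_getD, hi]
  · intro j hj
    have h₁ : a ≤ j := hmin j hj
    have h₂ : j ≤ a + m := hmax j hj
    simp only [List.length_map, List.length_range]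
    omega
  · simpa [List.getD_eq_getElem?_getD] using ha
  · simpa [List.range_succ] using hz

/-- Some machine with `k` states, started on the blank tape, halts with exactly `n` ones. -/
def Attains (k n : ℕ) : Prop :=
  ∃ (hk : 0 < k) (f : Fin k × Bool → Option (Fin k × Bool × Dir)) (w : List Bool) (t : ℕ),
    Computes f ⟨0, hk⟩ w t ∧ w.count true = n

theorem attains_iff {k n : ℕ} :
    Attains k n ↔ ∃ (hk : 0 < k) (f : Fin k × Bool → Option (Fin k × Bool × Dir)) (t : ℕ)
      (c : Cfg (Fin k)), stepsTM f t (initCfg ⟨0, hk⟩) = some c ∧ Halted f c ∧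
        {j | c.tape j = true}.encard = n := by
  constructor
  · rintro ⟨hk, f, w, t, ⟨c, hrun, hhalt, hw⟩, rfl⟩
    exact ⟨hk, f, t, c, hrun, hhalt, hw.encard_ones⟩
  · rintro ⟨hk, f, t, c, hrun, hhalt, hcard⟩
    have hfin := Set.finite_of_encard_eq_coe hcard
    obtain ⟨w, hw⟩ := exists_tapeWord hfin
    refine ⟨hk, f, w, t, ⟨c, hrun, hhalt, hw⟩, ?_⟩
    exact_mod_cast hw.encard_ones.symm.trans hcard

/-! ### Explicit machines -/

theorem abs_le_add_of_stepsTM {Q : Type} {f : Q × Bool → Option (Q × Bool × Dir)} {N : ℤ}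
    {t : ℕ} {c c' : Cfg Q} (hrun : stepsTM f t c = some c') (hhead : |c.head| ≤ N)
    (htape : ∀ j, c.tape j = true → |j| ≤ N) {j : ℤ} (hj : c'.tape j = true) : |j| ≤ N + t := by
  induction t generalizing c N with
  | zero =>
    obtain rfl : c = c' := by simpa [stepsTM] using hrun
    simpa using htape j hj
  | succ t ih =>
    obtain ⟨c₁, hstep, hrun⟩ := Option.bind_eq_some_iff.1 hrun
    obtain ⟨⟨q, b, d⟩, -, rfl⟩ := Option.map_eq_some_iff.1 hstep
    have hhead' : |c.head + d.move| ≤ N + 1 := by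
      have hd : |d.move| ≤ 1 := by cases d <;> simp [Dir.move]
      exact (abs_add_le _ _).trans (add_le_add hhead hd)
    have := ih hrun hhead' fun j hj => by
      obtain rfl | hne := eq_or_ne j c.head
      · exact hhead.trans (by simp)
      · exact (htape j (by simpa [hne] using hj)).trans (by simp)
    push_cast
    linarith

theorem attains_of_run {k n : ℕ} [NeZero k] (f : Fin k × Bool → Option (Fin k × Bool × Dir))
    (t : ℕ) (hrun : (stepsTM f t (initCfg ⟨0, NeZero.pos k⟩)).any (fun c =>
      (f (c.state, c.tape c.head)).isNone &&
        ((Finset.Icc (-t : ℤ) t).filter (c.tape · = true)).card == n) = true) :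
    Attains k n := by
  obtain ⟨c, hc, hn⟩ := Option.any_eq_true _ _ |>.1 hrun
  obtain ⟨hhalt, hcard⟩ := Bool.and_eq_true_iff.1 hn
  refine attains_iff.2 ⟨NeZero.pos k, f, t, c, hc, Option.isNone_iff_eq_none.1 hhalt, ?_⟩
  have hones : {j | c.tape j = true} = (Finset.Icc (-t : ℤ) t).filter (c.tape · = true) := by
    ext j
    simp only [Set.mem_ofPred_eq, Finset.coe_filter, Finset.mem_Icc, iff_and_self]
    intro hj
    have := abs_le_add_of_stepsTM hc (N := 0) (by simp [initCfg]) (by simp [initCfg]) hj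
    exact abs_le.1 (by simpa using this)
  rw [hones, Set.encard_coe_eq_coe_finsetCard, beq_iff_eq.1 hcard]

/-- The machine whose transition in state `q` reading `b` is entry `2 * q + b` of `rows`. -/
def machineOfRows {k : ℕ} (rows : List (Option (Fin k × Bool × Dir))) (p : Fin k × Bool) :
    Option (Fin k × Bool × Dir) :=
  rows.getD (2 * p.1 + p.2.toNat) none

theorem attains_one : Attains 1 1 :=
  attains_of_run (machineOfRows [some (0, true, .stay), none]) 1 (by decide +kernel)

theorem attains_two {n : ℕ} (hlo : 2 ≤ n) (hhi : n ≤ 4) : Attains 2 n := by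
  interval_cases n
  · exact attains_of_run (machineOfRows [some (1, true, .left), none, some (1, true, .right),
      none]) 2 (by decide +kernel)
  · exact attains_of_run (machineOfRows [some (1, true, .left), some (0, true, .right),
      some (0, true, .right), none]) 4 (by decide +kernel)
  · exact attains_of_run (machineOfRows [some (1, true, .left), some (1, true, .right),
      some (0, true, .right), none]) 5 (by decide +kernel)

theorem attains_three {n : ℕ} (hlo : 5 ≤ n) (hhi : n ≤ 6) : Attains 3 n := by
  interval_cases n
  · exact attains_of_run (machineOfRows [some (2, true, .right), none, some (0, true, .left),
      some (2, true, .left), some (1, true, .left), none]) 6 (by decide +kernel)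
  · exact attains_of_run (machineOfRows [some (1, true, .left), some (2, true, .right),
      some (2, true, .left), none, some (0, true, .right), some (1, false, .right)])
      10 (by decide +kernel)

theorem attains_four {n : ℕ} (hlo : 7 ≤ n) (hhi : n ≤ 12) : Attains 4 n := by
  interval_cases n
  · exact attains_of_run (machineOfRows [some (3, true, .left), none, some (3, true, .right), none,
      some (1, true, .right), some (3, false, .right), some (1, true, .left),
      some (2, true, .right)]) 11 (by decide +kernel)
  · exact attains_of_run (machineOfRows [some (2, true, .left), some (3, true, .left),
      some (0, true, .left), some (2, true, .right), some (1, true, .right), none,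
      some (1, true, .left), some (3, true, .left)]) 13 (by decide +kernel)
  · exact attains_of_run (machineOfRows [some (1, true, .left), some (3, true, .left),
      some (2, true, .right), some (1, false, .right), some (0, true, .left),
      some (0, true, .right), some (2, true, .left), none]) 18 (by decide +kernel)
  · exact attains_of_run (machineOfRows [some (1, true, .right), some (2, false, .right),
      some (3, true, .left), some (0, true, .right), some (0, true, .left), none,
      some (2, false, .left), some (3, true, .left)]) 29 (by decide +kernel)
  · exact attains_of_run (machineOfRows [some (3, true, .left), some (0, false, .right),
      some (3, true, .right), some (1, true, .right), some (1, true, .right),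
      some (0, false, .left), some (2, true, .left), none]) 42 (by decide +kernel)
  · exact attains_of_run (machineOfRows [some (1, true, .right), some (1, true, .left),
      some (0, true, .left), some (2, false, .left), none, some (3, true, .left),
      some (3, true, .right), some (0, false, .right)]) 106 (by decide +kernel)

/-! ### Numeric configurations -/

/-- A side of the head, which is also the direction of a move that is not a stay. -/
inductive Side : Type
  | left | right

namespace Side

/-- The opposite side. -/
def other : Side → Side
  | left => right
  | right => left

/-- The direction of a move towards the given side. -/
def dir : Side → Dir
  | left => .left
  | right => .right

/-- The function on sides with value `a` on side `d` and `b` on the other side. -/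
def select {α : Type} (d : Side) (a b : α) (e : Side) : α :=
  match d, e with
  | left, left => a
  | left, right => b
  | right, left => b
  | right, right => a

variable {α : Type}

@[simp] theorem select_self (d : Side) (a b : α) : d.select a b d = a := by cases d <;> rfl

@[simp] theorem select_other (d : Side) (a b : α) : d.select a b d.other = b := by cases d <;> rfl

theorem forall_iff (d : Side) {p : Side → Prop} : (∀ e, p e) ↔ p d ∧ p d.other :=
  ⟨fun h => ⟨h d, h d.other⟩, fun ⟨h, h'⟩ e => by cases d <;> cases e <;> assumption⟩

theorem select_const (d : Side) (a : α) : d.select a a = fun _ => a := by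
  funext e
  cases d <;> cases e <;> rfl

theorem move_dir_eq_or (d : Side) : d.dir.move = 1 ∨ d.dir.move = -1 := by
  cases d <;> simp [dir, Dir.move]

theorem move_dir_other (d : Side) : d.other.dir.move = -d.dir.move := by
  cases d <;> simp [dir, Dir.move, other]

end Side

/-- The number of ones among the binary digits of `n`. -/
def numOnes (n : ℕ) : ℕ := (Nat.digits 2 n).sum

theorem encard_testBit_eq_numOnes (n : ℕ) : {i | n.testBit i = true}.encard = numOnes n := by
  induction n using Nat.strong_induction_on with
  | _ n ih =>
    obtain rfl | hn := Nat.eq_zero_or_pos n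
    · simp [numOnes]
    · have hdigits : numOnes n = n % 2 + numOnes (n / 2) := by
        simp [numOnes, Nat.digits_def' one_lt_two hn]
      have hbit : (n.testBit 0).toNat = n % 2 := by
        rw [Nat.testBit_zero]
        obtain h | h := Nat.mod_two_eq_zero_or_one n <;> simp [h]
      rw [encard_setOf_nat, hdigits, hbit]
      simp only [Nat.testBit_succ, ih (n / 2) (Nat.div_lt_self hn one_lt_two)]
      push_cast
      exact add_comm _ _

variable {k : ℕ}

/-- A transition that moves the head: new state, written symbol, direction. -/
abbrev Move (k : ℕ) : Type := Fin k × Bool × Side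

/-- A configuration with finitely many ones, relative to the head: `side d` is the binary numeral
of the half-tape on side `d`, the cell next to the head being its lowest digit. -/
structure NumCfg (k : ℕ) where
  state : Fin k
  head : Bool
  side : Side → ℕ

namespace NumCfg

/-- The blank tape in state `q`. -/
def blank (q : Fin k) : NumCfg k := ⟨q, false, fun _ => 0⟩

/-- The configuration after the given transition. -/
def move (c : NumCfg k) : Move k → NumCfg k
  | (q, b, d) =>
    ⟨q, Nat.beq (c.side d % 2) 1, d.select (c.side d / 2) (2 * c.side d.other + b.toNat)⟩

end NumCfg

/-- The numeric configuration `c` describes `C` up to the position of the head. -/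
structure NumCfg.Represents (c : NumCfg k) (C : Cfg (Fin k)) : Prop where
  state : C.state = c.state
  head : C.tape C.head = c.head
  side : ∀ d (i : ℕ), C.tape (C.head + d.dir.move * (i + 1)) = (c.side d).testBit i

namespace NumCfg.Represents

variable {c : NumCfg k} {C : Cfg (Fin k)}

theorem blank (q : Fin k) : (NumCfg.blank q).Represents (initCfg q) :=
  ⟨rfl, rfl, fun _ i => by simp [initCfg, NumCfg.blank]⟩

theorem encard_ones (hc : c.Represents C) : {j | C.tape j = true}.encard =
    ((numOnes (c.side .left) + numOnes (c.side .right) + c.head.toNat : ℕ) : ℕ∞) := by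
  have hleft : ∀ i : ℕ, C.tape (C.head - 1 - i) = (c.side .left).testBit i := fun i => by
    rw [← hc.side, Side.dir, Dir.move]
    ring_nf
  have hright : ∀ i : ℕ, C.tape (C.head + 1 + i) = (c.side .right).testBit i := fun i => by
    rw [← hc.side, Side.dir, Dir.move]
    ring_nf
  simp only [encard_setOf_int C.tape C.head, hleft, hright, hc.head, encard_testBit_eq_numOnes]
  push_cast
  rfl

theorem update_side (hc : c.Represents C) (b : Bool) (d : Side) (i : ℕ) :
    Function.update C.tape C.head b (C.head + d.dir.move * (i + 1)) = (c.side d).testBit i := by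
  have hne : C.head + d.dir.move * (i + 1) ≠ C.head := by
    rcases d.move_dir_eq_or with h | h <;> rw [h] <;> omega
  exact (Function.update_of_ne hne _ _).trans (hc.side d i)

theorem stay (hc : c.Represents C) (q : Fin k) (b : Bool) :
    NumCfg.Represents ⟨q, b, c.side⟩ ⟨q, C.head, Function.update C.tape C.head b⟩ :=
  ⟨rfl, Function.update_self .., hc.update_side b⟩

theorem move (hc : c.Represents C) (q : Fin k) (b : Bool) (d : Side) :
    (c.move (q, b, d)).Represents
      ⟨q, C.head + d.dir.move, Function.update C.tape C.head b⟩ := by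
  refine ⟨rfl, ?_, (Side.forall_iff d).2 ⟨fun i => ?_, fun i => ?_⟩⟩
  · calc Function.update C.tape C.head b (C.head + d.dir.move)
      _ = (c.side d).testBit 0 := by simpa using hc.update_side b d 0
      _ = Nat.beq (c.side d % 2) 1 := by
        rw [Nat.testBit_zero, Bool.eq_iff_iff, decide_eq_true_iff, Nat.beq_eq]
  · have hcell : C.head + d.dir.move + d.dir.move * (i + 1) =
        C.head + d.dir.move * ((i + 1 : ℕ) + 1) := by
      push_cast
      ring
    simp only [hcell, hc.update_side, Nat.testBit_succ, NumCfg.move, Side.select_self]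
  · have hcell : C.head + d.dir.move + d.other.dir.move * (i + 1) =
        C.head + d.other.dir.move * i := by
      rw [d.move_dir_other]
      ring
    simp only [NumCfg.move, Side.select_other, hcell]
    cases i with
    | zero => cases b <;> simp
    | succ i =>
      have hhalf : (2 * c.side d.other + b.toNat) / 2 = c.side d.other := by
        have := b.toNat_lt
        omega
      rw [Nat.testBit_succ, hhalf, Nat.cast_succ, hc.update_side]

end NumCfg.Represents

/-! ### Eliminating stay moves -/

/-- The eventual effect of a transition followed by a run of stay moves: halting on the symbol `b`,
or a move. -/
inductive Outcome (k : ℕ) : Type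
  | halt (b : Bool)
  | move (m : Move k)

/-- The possible outcomes in each state on each scanned symbol. Having no outcome stands for an
infinite run of stay moves. -/
abbrev OutcomeRel (k : ℕ) : Type := Fin k → Bool → Outcome k → Prop

/-- The outcomes of the machine `f`, its stay moves being carried out. -/
inductive Resolves (f : Fin k × Bool → Option (Fin k × Bool × Dir)) : OutcomeRel k
  | halt {q : Fin k} {s : Bool} (h : f (q, s) = none) : Resolves f q s (.halt s)
  | move {q q' : Fin k} {s b : Bool} {d : Side} (h : f (q, s) = some (q', b, d.dir)) :
    Resolves f q s (.move (q', b, d))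
  | stay {q q' : Fin k} {s b : Bool} {o : Outcome k} (h : f (q, s) = some (q', b, .stay))
    (ho : Resolves f q' b o) : Resolves f q s o

/-- There is at most one outcome in each situation. -/
def OutcomeRel.Deterministic (g : OutcomeRel k) : Prop :=
  ∀ ⦃q s o o'⦄, g q s o → g q s o' → o = o'

theorem Resolves.deterministic (f : Fin k × Bool → Option (Fin k × Bool × Dir)) :
    OutcomeRel.Deterministic (Resolves f) := by
  intro q s o o' ho ho'
  induction ho with
  | halt h => cases ho' <;> simp_all
  | @move _ _ _ _ d h =>
    cases ho' with
    | halt h' => simp_all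
    | @move _ _ _ _ d' h' =>
      rw [h] at h'
      cases d <;> cases d' <;> simp_all [Side.dir]
    | stay h' => cases d <;> simp_all [Side.dir]
  | stay h _ ih =>
    cases ho' with
    | halt h' => simp_all
    | @move _ _ _ _ d' h' =>
      cases d' <;> simp_all [Side.dir]
    | stay h' ho' =>
      obtain ⟨rfl, rfl⟩ : _ ∧ _ := by simpa [h] using h'
      exact ih ho'

/-- From the given configuration, `g` halts with `n` ones on the tape. -/
inductive HaltsWith (g : OutcomeRel k) : NumCfg k → ℕ → Prop
  | halt {c : NumCfg k} {b : Bool} (h : g c.state c.head (.halt b)) :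
    HaltsWith g c (numOnes (c.side .left) + numOnes (c.side .right) + b.toNat)
  | move {c : NumCfg k} {m : Move k} {n : ℕ} (h : g c.state c.head (.move m))
    (hn : HaltsWith g (c.move m) n) : HaltsWith g c n

theorem haltsWith_of_stepsTM {f : Fin k × Bool → Option (Fin k × Bool × Dir)} {t : ℕ}
    {c : NumCfg k} {C C' : Cfg (Fin k)} (hc : c.Represents C) (hrun : stepsTM f t C = some C')
    (hhalt : Halted f C') : ∃ n : ℕ, HaltsWith (Resolves f) c n ∧
      {j | C'.tape j = true}.encard = n := by
  induction t generalizing c C with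
  | zero =>
    obtain rfl : C = C' := by simpa [stepsTM] using hrun
    rw [Halted, hc.state, hc.head] at hhalt
    exact ⟨_, .halt (.halt hhalt), hc.encard_ones⟩
  | succ t ih =>
    obtain ⟨C₁, hstep, hrun⟩ := Option.bind_eq_some_iff.1 hrun
    obtain ⟨⟨q, b, d⟩, hf, rfl⟩ := Option.map_eq_some_iff.1 hstep
    rw [hc.state, hc.head] at hf
    have hmove (e : Side) (he : d = e.dir) : ∃ n : ℕ, HaltsWith (Resolves f) c n ∧
        {j | C'.tape j = true}.encard = n := by
      subst he
      obtain ⟨n, hn, hcard⟩ := ih (hc.move q b e) hrun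
      exact ⟨n, .move (.move hf) hn, hcard⟩
    cases d with
    | left => exact hmove .left rfl
    | right => exact hmove .right rfl
    | stay =>
      simp only [Dir.move, add_zero] at hrun
      obtain ⟨n, hn, hcard⟩ := ih (hc.stay q b) hrun
      refine ⟨n, ?_, hcard⟩
      cases hn with
      | halt h => exact .halt (c := c) (.stay hf h)
      | move h hn => exact .move (.stay hf h) hn

/-! ### Closed sets of contexts -/

/-- A partial transition table without stay moves; entry `2 * q + b` is the transition of state `q`
reading `b`, and `none` stands for an entry not chosen yet. -/
abbrev Table (k : ℕ) : Type := ℕ → Option (Move k)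

/-- The moves listed in `T` are the outcomes of `g`, where `g` has an outcome at all. -/
def Table.Agrees (T : Table k) (g : OutcomeRel k) : Prop :=
  ∀ ⦃q : Fin k⦄ ⦃s m⦄, T (2 * q + s.toNat) = some m → ∀ ⦃o⦄, g q s o → o = .move m

/-- Membership of a number in a list. It is written with recursors because the kernel evaluates
them faster than `List.elem`, and this is the inner loop of the search. -/
def natElem (a : ℕ) (l : List ℕ) : Bool :=
  List.rec false (fun b _ ih => Bool.rec ih true (Nat.beq a b)) l

theorem natElem_iff {a : ℕ} {l : List ℕ} : natElem a l = true ↔ a ∈ l := by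
  induction l with
  | nil => simp [natElem]
  | cons b l ih =>
    have hcons : natElem a (b :: l) = (Nat.beq a b || natElem a l) := by
      cases h : Nat.beq a b <;> simp [natElem, h]
    rw [hcons, Bool.or_eq_true, Nat.beq_eq, ih, List.mem_cons]

/-- The number of annotated cells. A cell is coded by its symbol plus twice its history, a numeral
with `h` digits that record the last `h` times the head left the cell: digit `1 + 2 * q + b` if it
left from state `q` having read `b`, and digit `0` if it had not been there. -/
def cellBase (k h : ℕ) : ℕ := 2 * (2 * k + 1) ^ h

theorem cellBase_pos (k h : ℕ) : 0 < cellBase k h := by unfold cellBase; positivity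

theorem mod_cellBase_mod_two (k h a : ℕ) : a % cellBase k h % 2 = a % 2 :=
  Nat.mod_mod_of_dvd a (dvd_mul_right 2 _)

/-- The annotated cell left behind when state `q` reads the annotated cell `s` and writes `b`. -/
def markCell (k h q s : ℕ) (b : Bool) : ℕ :=
  2 * (((2 * k + 1) * (s / 2) + 1 + 2 * q + s % 2) % (2 * k + 1) ^ h) + b.toNat

theorem markCell_lt_cellBase (k h q s : ℕ) (b : Bool) : markCell k h q s b < cellBase k h := by
  have := Nat.mod_lt ((2 * k + 1) * (s / 2) + 1 + 2 * q + s % 2)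
    (show 0 < (2 * k + 1) ^ h by positivity)
  have := b.toNat_le
  unfold markCell cellBase
  omega

theorem markCell_mod_two (k h q s : ℕ) (b : Bool) : markCell k h q s b % 2 = b.toNat := by
  have := b.toNat_le
  unfold markCell
  omega

/-- The code of the context in which state `q` scans the cell `s` and `gram d` is the numeral, in
base `cellBase k h`, of the `n + 1` cells on side `d`. -/
def encodeContext (k h n q s : ℕ) (gram : Side → ℕ) : ℕ :=
  s + cellBase k h * (q + k * (gram .right + cellBase k h ^ (n + 1) * gram .left))

/-- One move from the context with code `x`: the direction of the move, the word behind the head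
before the move, and the possible next contexts if the word uncovered ahead must lie in `G`. -/
def expandContext (T : Table k) (h n : ℕ) (G : Side → List ℕ) (x : ℕ) :
    Option (Side × ℕ × List ℕ) :=
  let B := cellBase k h
  let W := B ^ (n + 1)
  let s := x % B
  let q := x / B % k
  let gram := Side.left.select (x / (B * k * W)) (x / (B * k) % W)
  (T (2 * q + s % 2)).map fun (q', b, d) =>
    let matching := (G d).filter fun g => Nat.beq (g % B ^ n) (gram d / B)
    (d, gram d.other, matching.map fun g => encodeContext k h n q' (gram d % B)
      (d.select g ((B * gram d.other + markCell k h q s b) % W)))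

theorem expandContext_encodeContext (T : Table k) {h n s : ℕ} {gram : Side → ℕ}
    (G : Side → List ℕ) (q : Fin k) (hs : s < cellBase k h)
    (hgram : ∀ d, gram d < cellBase k h ^ (n + 1)) :
    expandContext T h n G (encodeContext k h n q s gram) =
      (T (2 * q + s % 2)).map fun (q', b, d) =>
        let matching := (G d).filter fun g => Nat.beq (g % cellBase k h ^ n) (gram d / cellBase k h)
        (d, gram d.other, matching.map fun g =>
          encodeContext k h n q' (gram d % cellBase k h)
            (d.select g
              ((cellBase k h * gram d.other + markCell k h q s b) % cellBase k h ^ (n + 1)))) := by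
  have hB := cellBase_pos k h
  generalize hx : encodeContext k h n q s gram = x
  rw [encodeContext] at hx
  have hcell : x % cellBase k h = s := by
    rw [← hx, Nat.add_mul_mod_self_left, Nat.mod_eq_of_lt hs]
  have hdivB : x / cellBase k h = q + k * (gram .right + cellBase k h ^ (n + 1) * gram .left) := by
    rw [← hx, Nat.add_mul_div_left _ _ hB, Nat.div_eq_of_lt hs, zero_add]
  have hstate : x / cellBase k h % k = q := by
    rw [hdivB, Nat.add_mul_mod_self_left, Nat.mod_eq_of_lt q.isLt]
  have hdivk : x / (cellBase k h * k) = gram .right + cellBase k h ^ (n + 1) * gram .left := by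
    rw [← Nat.div_div_eq_div_mul, hdivB, Nat.add_mul_div_left _ _ q.pos,
      Nat.div_eq_of_lt q.isLt, zero_add]
  have hright : x / (cellBase k h * k) % cellBase k h ^ (n + 1) = gram .right := by
    rw [hdivk, Nat.add_mul_mod_self_left, Nat.mod_eq_of_lt (hgram .right)]
  have hleft : x / (cellBase k h * k * cellBase k h ^ (n + 1)) = gram .left := by
    rw [← Nat.div_div_eq_div_mul, hdivk, Nat.add_mul_div_left _ _ (pow_pos hB _),
      Nat.div_eq_of_lt (hgram .right), zero_add]
  have hgrams : Side.left.select (gram .left) (gram .right) = gram := by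
    funext d
    cases d <;> rfl
  simp only [expandContext, hcell, hstate, hright, hleft, hgrams]

/-- The context `x` has a move, which leaves a word of `G` behind and only leads into `xs`. -/
def IsSettled (T : Table k) (h n : ℕ) (G : Side → List ℕ) (xs : List ℕ) (x : ℕ) : Prop :=
  ∃ r ∈ expandContext T h n G x, r.2.1 ∈ G r.1.other ∧ ∀ y ∈ r.2.2, y ∈ xs

/-- `G d` contains every word that occurs at distance at least one from the head on side `d`, and
`xs` every context that occurs, in the run from the blank tape; each context has a move. -/
structure IsGramClosed (T : Table k) (h n : ℕ) (G : Side → List ℕ) (xs : List ℕ) : Prop where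
  zero_mem_grams : ∀ d, 0 ∈ G d
  zero_mem : 0 ∈ xs
  settled : ∀ x ∈ xs, IsSettled T h n G xs x

theorem IsSettled.mono {T : Table k} {h n : ℕ} {G : Side → List ℕ} {xs ys : List ℕ} {x : ℕ}
    (hx : IsSettled T h n G xs x) (hsub : xs ⊆ ys) : IsSettled T h n G ys x :=
  let ⟨r, hr, hbehind, hnext⟩ := hx
  ⟨r, hr, hbehind, fun y hy => hsub (hnext y hy)⟩

/-- Worklist computation, with fuel, of a closed set of contexts: `xs` is the set found so far and
`todo` its unsettled part. When a word has to be added to `G`, the computation starts afresh. -/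
def explore (T : Table k) (h n : ℕ) : ℕ → (Side → List ℕ) → List ℕ → List ℕ → Bool
  | 0, _, _, _ => false
  | _ + 1, _, [], _ => true
  | t + 1, G, x :: todo, xs =>
    match expandContext T h n G x with
    | none => false
    | some (d, z, next) =>
      bif natElem z (G d.other) then
        let new := next.filter fun y => !natElem y xs
        explore T h n t G (new ++ todo) (new ++ xs)
      else explore T h n t (d.select (G d) (z :: G d.other)) [0] [0]

theorem exists_isGramClosed_of_explore {T : Table k} {h n t : ℕ} {G : Side → List ℕ}
    {todo xs : List ℕ} (hexp : explore T h n t G todo xs = true)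
    (hpending : ∀ x ∈ xs, x ∈ todo ∨ IsSettled T h n G xs x) (hG : ∀ d, 0 ∈ G d)
    (hxs : 0 ∈ xs) : ∃ G' xs', IsGramClosed T h n G' xs' := by
  induction t generalizing G todo xs with
  | zero => exact absurd hexp Bool.false_ne_true
  | succ t ih =>
    cases todo with
    | nil => exact ⟨G, xs, hG, hxs, fun x hx => (hpending x hx).resolve_left List.not_mem_nil⟩
    | cons x todo =>
      rw [explore] at hexp
      split at hexp
      · exact absurd hexp Bool.false_ne_true
      · rename_i d z next hx
        cases hz : natElem z (G d.other) with
        | false =>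
          rw [hz, cond_false] at hexp
          refine ih hexp (fun y hy => .inl hy) ((Side.forall_iff d).2 ⟨?_, ?_⟩) (by simp)
          · simpa using hG d
          · simpa using .inr (hG d.other)
        | true =>
          rw [hz, cond_true] at hexp
          refine ih hexp (fun y hy => ?_) hG (List.mem_append_right _ hxs)
          obtain hnew | hold := List.mem_append.1 hy
          · exact .inl (List.mem_append_left _ hnew)
          obtain htodo | hsettled := hpending y hold
          · obtain rfl | htodo := List.mem_cons.1 htodo
            · refine .inr ⟨_, hx, natElem_iff.1 hz, fun y hy => ?_⟩
              by_cases hyxs : y ∈ xs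
              · exact List.mem_append_right _ hyxs
              · exact List.mem_append_left _ (List.mem_filter.2 ⟨hy, by
                  simpa [← natElem_iff] using hyxs⟩)
            · exact .inl (List.mem_append_right _ htodo)
          · exact .inr (hsettled.mono (List.subset_append_right _ _))

/-- The annotated scanned cell `s` and half-tapes `A`, numerals in base `cellBase k h`, carry the
symbols of `c`. -/
structure Annotates (h : ℕ) (c : NumCfg k) (s : ℕ) (A : Side → ℕ) : Prop where
  cell_lt : s < cellBase k h
  cell_mod_two : s % 2 = c.head.toNat
  digit_mod_two : ∀ d i, A d / cellBase k h ^ i % 2 = c.side d / 2 ^ i % 2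

theorem div_pow_succ_mul_add {B m a i : ℕ} (hm : m < B) :
    (B * a + m) / B ^ (i + 1) = a / B ^ i := by
  rw [pow_succ', ← Nat.div_div_eq_div_mul, Nat.mul_add_div (by omega), Nat.div_eq_of_lt hm,
    add_zero]

theorem Annotates.move {h s x : ℕ} {c : NumCfg k} {A : Side → ℕ} (hA : Annotates h c s A)
    (q : Fin k) {b : Bool} (d : Side) (hx : x < cellBase k h) (hxb : x % 2 = b.toNat) :
    Annotates h (c.move (q, b, d)) (A d % cellBase k h)
      (d.select (A d / cellBase k h) (cellBase k h * A d.other + x)) := by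
  refine ⟨Nat.mod_lt _ (cellBase_pos k h), ?_, (Side.forall_iff d).2 ⟨fun i => ?_, fun i => ?_⟩⟩
  · have hbit : A d % 2 = c.side d % 2 := by simpa using hA.digit_mod_two d 0
    rw [mod_cellBase_mod_two, hbit, NumCfg.move]
    obtain h | h := Nat.mod_two_eq_zero_or_one (c.side d) <;> rw [h] <;> rfl
  · simpa [NumCfg.move, Nat.div_div_eq_div_mul, ← pow_succ'] using hA.digit_mod_two d (i + 1)
  · simp only [NumCfg.move, Side.select_other]
    cases i with
    | zero =>
      have heven : 2 ∣ cellBase k h * A d.other := ⟨_, by rw [cellBase, mul_assoc]⟩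
      rw [pow_zero, pow_zero]
      omega
    | succ i =>
      rw [div_pow_succ_mul_add hx, div_pow_succ_mul_add b.toNat_lt]
      exact hA.digit_mod_two d.other i

/-- Some annotation of `c` has all its words in `G` and its context in `xs`. -/
structure Tracks (h n : ℕ) (G : Side → List ℕ) (xs : List ℕ) (c : NumCfg k) (s : ℕ)
    (A : Side → ℕ) : Prop extends Annotates h c s A where
  gram_mem : ∀ d i, A d / cellBase k h ^ (i + 1) % cellBase k h ^ (n + 1) ∈ G d
  context_mem : encodeContext k h n c.state s
    (fun d => A d % cellBase k h ^ (n + 1)) ∈ xs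

theorem IsGramClosed.tracks_blank {T : Table k} {h n : ℕ} {G : Side → List ℕ} {xs : List ℕ}
    (hcl : IsGramClosed T h n G xs) {q : Fin k} (hq : (q : ℕ) = 0) :
    Tracks h n G xs (NumCfg.blank q) 0 fun _ => 0 where
  cell_lt := cellBase_pos k h
  cell_mod_two := rfl
  digit_mod_two d i := by simp [NumCfg.blank]
  gram_mem d i := by simpa using hcl.zero_mem_grams d
  context_mem := by simpa [encodeContext, NumCfg.blank, hq] using hcl.zero_mem

theorem IsGramClosed.exists_move {T : Table k} {h n s : ℕ} {G : Side → List ℕ} {xs : List ℕ}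
    {c : NumCfg k} {A : Side → ℕ} (hcl : IsGramClosed T h n G xs) (hA : Tracks h n G xs c s A) :
    ∃ m, T (2 * c.state + c.head.toNat) = some m ∧ ∃ s' A', Tracks h n G xs (c.move m) s' A' := by
  obtain ⟨r, hr, hbehind, hnext⟩ := hcl.settled _ hA.context_mem
  rw [expandContext_encodeContext T G c.state hA.cell_lt
    fun d => Nat.mod_lt _ (pow_pos (cellBase_pos k h) _), hA.cell_mod_two] at hr
  obtain ⟨⟨q', b, d⟩, hT, rfl⟩ := Option.map_eq_some_iff.1 hr
  have hmark := markCell_lt_cellBase k h c.state s b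
  refine ⟨_, hT, _, _, hA.move q' d hmark (markCell_mod_two ..), ?_, ?_⟩
  · refine (Side.forall_iff d).2 ⟨fun i => ?_, fun i => ?_⟩
    · simpa [Nat.div_div_eq_div_mul, ← pow_succ'] using hA.gram_mem d (i + 1)
    · rw [Side.select_other, div_pow_succ_mul_add hmark]
      cases i with
      | zero => simpa using hbehind
      | succ i => exact hA.gram_mem d.other i
  · refine hnext _ (List.mem_map.2 ⟨A d / cellBase k h % cellBase k h ^ (n + 1), ?_, ?_⟩)
    · have hmem : A d / cellBase k h % cellBase k h ^ (n + 1) ∈ G d := by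
        simpa using hA.gram_mem d 0
      refine List.mem_filter.2 ⟨hmem, Nat.beq_eq.mpr ?_⟩
      rw [Nat.mod_mod_of_dvd _ (pow_dvd_pow _ n.le_succ), pow_succ', Nat.mod_mul_right_div_self]
    · congr 1
      · exact Nat.mod_mod_of_dvd _ (dvd_pow_self _ n.succ_ne_zero)
      · funext e
        revert e
        refine (Side.forall_iff d).2 ⟨by simp, ?_⟩
        simp [Nat.add_mod, Nat.mul_mod]

theorem IsGramClosed.not_haltsWith {T : Table k} {g : OutcomeRel k} {h n m : ℕ}
    {G : Side → List ℕ} {xs : List ℕ} {q : Fin k} (hcl : IsGramClosed T h n G xs)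
    (hT : T.Agrees g) (hq : (q : ℕ) = 0) : ¬HaltsWith g (NumCfg.blank q) m := by
  suffices hmain : ∀ c, HaltsWith g c m → ∀ s A, ¬Tracks h n G xs c s A from
    fun hhalt => hmain _ hhalt _ _ (hcl.tracks_blank hq)
  intro c hhalt
  induction hhalt with
  | halt hg =>
    intro s A hA
    obtain ⟨m, hm, -⟩ := hcl.exists_move hA
    cases hT hm hg
  | move hg _ ih =>
    intro s A hA
    obtain ⟨m, hm, s', A', hA'⟩ := hcl.exists_move hA
    obtain rfl : _ = m := Outcome.move.inj (hT hm hg)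
    exact ih s' A' hA'

/-- A sufficient test, with `n + 1` cells of context on either side and `h` events of history, for
`T` not to halt on the blank tape. The fuel is ample for three states. -/
def neverHalts (T : Table k) (h n : ℕ) : Bool := explore T h n 300 (fun _ => [0]) [0] [0]

theorem not_haltsWith_of_neverHalts {T : Table k} {g : OutcomeRel k} {h n m : ℕ} {q : Fin k}
    (hnever : neverHalts T h n = true) (hT : T.Agrees g) (hq : (q : ℕ) = 0) :
    ¬HaltsWith g (NumCfg.blank q) m := by
  obtain ⟨G, xs, hcl⟩ := exists_isGramClosed_of_explore hnever (fun x hx => .inl hx) (by simp)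
    (by simp)
  exact hcl.not_haltsWith hT hq

/-! ### Searching through transition tables -/

/-- The table `T` with entry `i` set to `m`. -/
def Table.set (T : Table k) (i : ℕ) (m : Move k) : Table k :=
  fun j => bif i.beq j then some m else T j

theorem Table.isSome_set (T : Table k) (i j : ℕ) (m : Move k) :
    (T.set i m j).isSome = (Nat.beq i j || (T j).isSome) := by
  cases h : Nat.beq i j <;> simp [Table.set, h]

theorem Table.Agrees.set {T : Table k} {g : OutcomeRel k} {q : Fin k} {s : Bool} {m : Move k}
    (hT : T.Agrees g) (hg : g.Deterministic) (hm : g q s (.move m)) :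
    (T.set (2 * q + s.toNat) m).Agrees g := by
  intro q' s' m' hm' o ho
  rw [Table.set] at hm'
  cases hi : Nat.beq (2 * q + s.toNat) (2 * q' + s'.toNat) with
  | false => exact hT (by simpa [hi] using hm') ho
  | true =>
    obtain rfl : m = m' := by simpa [hi] using hm'
    have hi' := Nat.beq_eq.mp hi
    obtain rfl : q = q' := Fin.ext (by have := s.toNat_lt; have := s'.toNat_lt; omega)
    obtain rfl : s = s' := by
      have : s.toNat = s'.toNat := by omega
      cases s <;> cases s' <;> simp_all
    exact hg ho hm

theorem Table.Agrees.not_haltsWith_of_total {T : Table k} {g : OutcomeRel k} {c : NumCfg k} {n : ℕ}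
    (hT : T.Agrees g) (htotal : ∀ j < 2 * k, (T j).isSome = true) : ¬HaltsWith g c n := by
  intro hhalt
  induction hhalt with
  | @halt c b hg =>
    have hj : 2 * c.state + c.head.toNat < 2 * k := by have := c.head.toNat_lt; omega
    obtain ⟨m, hm⟩ := Option.isSome_iff_exists.1 (htotal _ hj)
    cases hT hm hg
  | move _ _ ih => exact ih

/-- All moves of a machine with `k` states. -/
def moves (k : ℕ) : List (Move k) :=
  (List.finRange k).flatMap fun q =>
    [(q, true, .left), (q, false, .left), (q, true, .right), (q, false, .right)]

theorem mem_moves (m : Move k) : m ∈ moves k := by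
  obtain ⟨q, b, d⟩ := m
  refine List.mem_flatMap.2 ⟨q, List.mem_finRange q, ?_⟩
  cases b <;> cases d <;> simp

/-- A sufficient test, by a search of depth `t`, for no completion of `T` to halt with more than `N`
ones when run on from `c`, a configuration that it reaches from the blank tape. The context
sizes and histories in the base case, found by experiment, suffice for three states. -/
def searchBound (N : ℕ) : ℕ → Table k → NumCfg k → Bool
  | 0, T, _ => neverHalts T 0 0 || neverHalts T 0 1 || neverHalts T 0 2 || neverHalts T 2 1
  | t + 1, T, c =>
    let i := 2 * c.state + c.head.toNat
    match T i with
    | some m => searchBound N t T (c.move m)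
    | none =>
      Nat.ble (numOnes (c.side .left) + numOnes (c.side .right) + 1) N &&
        ((List.range (2 * k)).all (fun j => Nat.beq i j || (T j).isSome) ||
          (moves k).all fun m => searchBound N t (T.set i m) (c.move m))

theorem HaltsWith.le_of_searchBound [NeZero k] {N t n : ℕ} {T : Table k} {g : OutcomeRel k}
    {c : NumCfg k} (hg : g.Deterministic) (hblank : HaltsWith g (NumCfg.blank 0) n)
    (hT : T.Agrees g) (hc : HaltsWith g c n) (hsearch : searchBound N t T c = true) : n ≤ N := by
  induction t generalizing T c with
  | zero =>
    simp only [searchBound, Bool.or_eq_true, or_assoc] at hsearch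
    obtain h | h | h | h := hsearch <;>
      exact absurd hblank (not_haltsWith_of_neverHalts h hT (Fin.val_zero k))
  | succ t ih =>
    rw [searchBound] at hsearch
    split at hsearch
    · rename_i m hm
      cases hc with
      | halt ho => cases hT hm ho
      | move ho hn =>
        cases hT hm ho
        exact ih hT hn hsearch
    · obtain ⟨hcount, hrest⟩ := Bool.and_eq_true_iff.1 hsearch
      cases hc with
      | @halt _ b _ =>
        have := Nat.le_of_ble_eq_true hcount
        have := b.toNat_le
        omega
      | @move _ m _ ho hn =>
        have hTm := hT.set hg ho
        obtain hfull | hall := Bool.or_eq_true_iff.1 hrest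
        · refine absurd hn (hTm.not_haltsWith_of_total fun j hj => ?_)
          rw [Table.isSome_set]
          exact List.all_eq_true.1 hfull j (List.mem_range.2 hj)
        · exact ih hTm hn (List.all_eq_true.1 hall m (mem_moves m))

/-! ### Normalizing the first move -/

theorem HaltsWith.le_one_or_exists_write {g : OutcomeRel k} {q : Fin k} {n : ℕ}
    (h : HaltsWith g (NumCfg.blank q) n) :
    n ≤ 1 ∨ ∃ q₀ q₁ d, g q₀ false (.move (q₁, true, d)) ∧ HaltsWith g (NumCfg.blank q₀) n := by
  generalize hc : NumCfg.blank q = c at h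
  induction h generalizing q with
  | @halt _ b _ =>
    subst hc
    exact .inl (by simpa [NumCfg.blank, numOnes] using b.toNat_le)
  | @move c m n hm hn ih =>
    subst hc
    obtain ⟨q', b, d⟩ := m
    cases b with
    | false => exact ih (q := q') (by simp [NumCfg.blank, NumCfg.move, d.select_const, Nat.beq])
    | true => exact .inr ⟨q, q', d, hm, .move hm hn⟩

namespace Side

/-- The reflection that takes `d` to `right`, which is the identity if `d` is `right`. -/
def orient (d : Side) : Side → Side := d.select right left

theorem orient_self (d : Side) : d.orient d = right := select_self ..

theorem orient_orient (d e : Side) : d.orient (d.orient e) = e := by cases d <;> cases e <;> rfl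

theorem orient_other (d e : Side) : d.orient e.other = (d.orient e).other := by
  cases d <;> cases e <;> rfl

theorem select_orient {α : Type} (d e : Side) (a b : α) (x : Side) :
    (d.orient e).select a b x = e.select a b (d.orient x) := by
  cases d <;> cases e <;> cases x <;> rfl

end Side

/-- Rename states by `σ` and reflect by `d.orient`. -/
def Outcome.map (σ : Fin k → Fin k) (d : Side) : Outcome k → Outcome k
  | halt b => halt b
  | move (q, b, e) => move (σ q, b, d.orient e)

/-- Rename states by `σ` and reflect by `d.orient`, which is its own inverse. -/
def NumCfg.map (σ : Fin k → Fin k) (d : Side) (c : NumCfg k) : NumCfg k :=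
  ⟨σ c.state, c.head, c.side ∘ d.orient⟩

/-- The relation `g` conjugated by a renaming `σ` of states and the reflection `d.orient`. -/
def OutcomeRel.map (σ : Fin k → Fin k) (d : Side) (g : OutcomeRel k) : OutcomeRel k :=
  fun q s o => ∃ q₀ o₀, g q₀ s o₀ ∧ σ q₀ = q ∧ o₀.map σ d = o

theorem OutcomeRel.Deterministic.map {g : OutcomeRel k} (hg : g.Deterministic) {σ : Fin k → Fin k}
    (hσ : Function.Injective σ) (d : Side) : (g.map σ d).Deterministic := by
  rintro _ s _ _ ⟨q, o, ho, rfl, rfl⟩ ⟨q', o', ho', hq, rfl⟩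
  rw [hg ho (hσ hq ▸ ho')]

theorem NumCfg.map_move (σ : Fin k → Fin k) (d : Side) (c : NumCfg k) (q : Fin k) (b : Bool)
    (e : Side) : (c.move (q, b, e)).map σ d = (c.map σ d).move (σ q, b, d.orient e) := by
  simp only [NumCfg.move, NumCfg.map, Function.comp_apply, ← Side.orient_other,
    Side.orient_orient, mk.injEq, true_and]
  exact funext fun x => (Side.select_orient ..).symm

theorem HaltsWith.map {g : OutcomeRel k} {c : NumCfg k} {n : ℕ} (h : HaltsWith g c n)
    (σ : Fin k → Fin k) (d : Side) : HaltsWith (g.map σ d) (c.map σ d) n := by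
  induction h with
  | @halt c b hb =>
    have hones : numOnes (c.side .left) + numOnes (c.side .right) =
        numOnes ((c.map σ d).side .left) + numOnes ((c.map σ d).side .right) := by
      cases d <;> simp [NumCfg.map, Side.orient, Side.select, add_comm]
    rw [hones]
    exact .halt ⟨_, _, hb, rfl, rfl⟩
  | @move c m n hm _ ih =>
    obtain ⟨q, b, e⟩ := m
    rw [NumCfg.map_move] at ih
    exact .move ⟨_, _, hm, rfl, rfl⟩ ih

theorem exists_perm_apply_eq_zero_one [NeZero k] (q₀ q₁ : Fin k) :
    ∃ σ : Equiv.Perm (Fin k), σ q₀ = 0 ∧ (σ q₁ = 0 ∨ σ q₁ = 1) := by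
  obtain rfl | hne := eq_or_ne q₀ q₁
  · exact ⟨Equiv.swap q₀ 0, by simp⟩
  have hk : Nontrivial (Fin k) := ⟨q₀, q₁, hne⟩
  have hr : Equiv.swap q₀ 0 q₁ ≠ 0 := fun h =>
    hne ((Equiv.swap q₀ 0).injective (h.trans (Equiv.swap_apply_left q₀ 0).symm)).symm
  have h01 : (0 : Fin k) ≠ 1 := fun h => by
    have := Fin.nontrivial_iff_two_le.1 hk
    have := Fin.zero_eq_one_iff.1 h
    omega
  refine ⟨(Equiv.swap q₀ 0).trans (Equiv.swap (Equiv.swap q₀ 0 q₁) 1), ?_, .inr ?_⟩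
  · simp [Equiv.swap_apply_of_ne_of_ne hr.symm h01]
  · simp

/-- A sufficient test for `BB(k) ≤ N`. No machine with at most three states halts after more than
21 steps, hence the depth. -/
def boundCheck (k N : ℕ) [NeZero k] : Bool :=
  [0, 1].all fun q : Fin k =>
    searchBound N 21 (Table.set (fun _ => none) 0 (q, true, .right))
      ((NumCfg.blank 0).move (q, true, .right))

theorem HaltsWith.le_of_boundCheck [NeZero k] {N n : ℕ} {g : OutcomeRel k} {q : Fin k} (hN : 1 ≤ N)
    (hcheck : boundCheck k N = true) (hg : g.Deterministic)
    (h : HaltsWith g (NumCfg.blank q) n) : n ≤ N := by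
  obtain hle | ⟨q₀, q₁, d, hm, hn⟩ := h.le_one_or_exists_write
  · exact hle.trans hN
  obtain ⟨σ, hσ₀, hσ₁⟩ := exists_perm_apply_eq_zero_one q₀ q₁
  have hg' := hg.map σ.injective d
  have hblank : HaltsWith (g.map σ d) (NumCfg.blank 0) n := by
    have := hn.map σ d
    rwa [NumCfg.map, NumCfg.blank, hσ₀] at this
  have hm' : g.map σ d 0 false (.move (σ q₁, true, .right)) :=
    ⟨_, _, hm, hσ₀, by rw [Outcome.map, d.orient_self]⟩
  have hT : (Table.set (fun _ => none) 0 (σ q₁, true, .right)).Agrees (g.map σ d) := by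
    have hnone : Table.Agrees (fun _ => none) (g.map σ d) := by simp [Table.Agrees]
    simpa using hnone.set hg' hm'
  refine HaltsWith.le_of_searchBound (c := (NumCfg.blank 0).move (σ q₁, true, .right))
    hg' hblank hT ?_ (List.all_eq_true.1 hcheck (σ q₁) (by simpa using hσ₁))
  cases hblank with
  | halt ho => cases hg' ho hm'
  | move ho hn =>
    cases hg' ho hm'
    exact hn

theorem Attains.le_of_boundCheck [NeZero k] {N n : ℕ} (h : Attains k n) (hN : 1 ≤ N)
    (hcheck : boundCheck k N = true) : n ≤ N := by
  obtain ⟨hk, f, t, c, hrun, hhalt, hcard⟩ := attains_iff.1 h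
  obtain ⟨m, hm, hcard'⟩ := haltsWith_of_stepsTM (.blank _) hrun hhalt
  obtain rfl : m = n := by exact_mod_cast hcard'.symm.trans hcard
  exact hm.le_of_boundCheck hN hcheck (Resolves.deterministic f)

set_option maxRecDepth 100000 in
theorem boundCheck_one : boundCheck 1 1 = true := by decide +kernel

set_option maxRecDepth 100000 in
theorem boundCheck_two : boundCheck 2 4 = true := by decide +kernel

set_option maxRecDepth 100000 in
theorem boundCheck_three : boundCheck 3 6 = true := by decide +kernel

/-- for every natural number `n` with `1 ≤ n ≤ 12`, the Placid
Platypus function `PP(n)`, i.e. the least number `k` of states of a Turing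
machine halting on the all-zero tape with exactly `n` ones in its computed
word, satisfies: `PP(1) = 1`, `PP(n) = 2` for `2 ≤ n ≤ 4`, `PP(n) = 3` for
`5 ≤ n ≤ 6`, and `PP(n) = 4` for `7 ≤ n ≤ 12`. -/
theorem placid_platypus_values (n : ℕ) (h1 : 1 ≤ n) (h2 : n ≤ 12) :
    IsLeast
      {k : ℕ |
        ∃ (hk : 0 < k)
          (f : Fin k × Bool → Option (Fin k × Bool × Dir)) (w : List Bool) (t : ℕ),
          Computes f ⟨0, hk⟩ w t ∧ w.count true = n}
      (if n = 1 then 1 else if n ≤ 4 then 2 else if n ≤ 6 then 3 else 4) := by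
  have hattains : Attains (if n = 1 then 1 else if n ≤ 4 then 2 else if n ≤ 6 then 3 else 4) n := by
    split_ifs with hn₁ hn₄ hn₆
    · exact hn₁ ▸ attains_one
    · exact attains_two (by omega) hn₄
    · exact attains_three (by omega) hn₆
    · exact attains_four (by omega) h2
  refine ⟨hattains, fun k (hk : Attains k n) => ?_⟩
  have hbound₁ : k = 1 → n ≤ 1 := fun h =>
    (h ▸ hk : Attains 1 n).le_of_boundCheck le_rfl boundCheck_one
  have hbound₂ : k = 2 → n ≤ 4 := fun h =>
    (h ▸ hk : Attains 2 n).le_of_boundCheck (by norm_num) boundCheck_two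
  have hbound₃ : k = 3 → n ≤ 6 := fun h =>
    (h ▸ hk : Attains 3 n).le_of_boundCheck (by norm_num) boundCheck_three
  have hpos : 0 < k := hk.1
  split_ifs <;> omega
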